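/- Let $k$ be a commutative ring, let $R,S$ be associative unital $k$-algebras and let $(R,S,P,Q,\varphi,\psi)$ be a Morita context over $k$: $P$ is an $(S,R)$-bimodule and $Q$ an $(R,S)$-bimodule (both with symmetric $k$-action), $\varphi : P\otimes_R Q\to S$ is an isomorphism of $(S,S)$-bimodules and $\psi : Q\otimes_S P\to R$ an isomorphism of $(R,R)$-bimodules, such that $\varphi(p\otimes q)\,p'=p\,\psi(q\otimes p')$ and $\psi(q\otimes p)\,q'=q\,\varphi(p\otimes q')$ for all $p,p'\in P$, $q,q'\in Q$. Fix finite families $(p'_j)_j$ in $P$ and $(q'_j)_j$ in $Q$ with $\sum_j\varphi(p'_j\otimes q'_j)=1_S$. Write $R^e:=R\otimes_k R^{op}$ and $S^e:=S\otimes_k S^{op}$. Let $P^e:=P\otimes_k Q$, a right $R^e$-module via $(p\otimes q)\cdot(r\otimes\tilde r^{op}):=(p r)\otimes(\tilde r q)$, and let $Q^e:=Q\otimes_k P$, a left $R^e$-module via $(r\otimes\tilde r^{op})\cdot(q\otimes p):=(r q)\otimes(p\tilde r)$. Let $U$ be a $k$-algebra and $\eta : R^e\to U$ a homomorphism of $k$-algebras;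 regard $U$ as an $(R^e,R^e)$-bimodule by left and right multiplication through $\eta$, and set $\tilde U:=P^e\otimes_{R^e}U\otimes_{R^e}Q^e$. Then the formula $$\big((a_1\otimes b_1)\otimes u\otimes(c_1\otimes d_1)\big)\cdot\big((a_2\otimes b_2)\otimes v\otimes(c_2\otimes d_2)\big):=(a_1\otimes b_1)\otimes\Big[\big(u\,\eta(\psi(c_1\otimes a_2)\otimes 1)\big)\big(\eta(1\otimes\psi(b_2\otimes d_1)^{op})\,v\big)\Big]\otimes(c_2\otimes d_2)$$ (for $a_1,a_2,d_1,d_2\in P$, $b_1,b_2,c_1,c_2\in Q$, $u,v\in U$) gives a well-defined, $k$-bilinear, associative multiplication on $\tilde U$ with unit $\sum_{i,j}(p'_j\otimes q'_i)\otimes 1_U\otimes(q'_j\otimes p'_i)$, and the map $$\tilde\eta : S^e\to\tilde U,\qquad s\otimes\tilde s^{op}\mapsto\sum_{i,j}(s p'_j\otimes q'_i)\otimes 1_U\otimes(q'_j\otimes\tilde s p'_i),$$ is well defined and a homomorphism of $k$-algebras; in particular the Morita base change $\tilde U$ is an $S^e$-ring. -/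

import Mathlib

open scoped TensorProduct
open MulOpposite

/-- The `k`-submodule of balancing relations `(m·a) ⊗ n − m ⊗ (a·n)` inside `M ⊗[k] N`,
for a `k`-algebra `A`, a right `A`-module `M` (a module over `Aᵐᵒᵖ`) and a left `A`-module `N`. -/
def midRel (k A M N : Type*) [CommRing k] [Ring A] [Algebra k A]
    [AddCommGroup M] [Module k M] [Module Aᵐᵒᵖ M]
    [AddCommGroup N] [Module k N] [Module A N] :
    Submodule k (M ⊗[k] N) :=
  Submodule.span k {x | ∃ (m : M) (a : A) (n : N),
    x = (op a • m) ⊗ₜ[k] n - m ⊗ₜ[k] (a • n)}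

/-- The balanced tensor product `M ⊗_A N` over a possibly noncommutative `k`-algebra `A`, as the
quotient of `M ⊗[k] N` by the balancing relations. -/
abbrev BalTensor (k A M N : Type*) [CommRing k] [Ring A] [Algebra k A]
    [AddCommGroup M] [Module k M] [Module Aᵐᵒᵖ M]
    [AddCommGroup N] [Module k N] [Module A N] :=
  (M ⊗[k] N) ⧸ midRel k A M N

/-- The class of `m ⊗ n` in `M ⊗_A N`. -/
def BalTensor.tmul (k A : Type*) {M N : Type*} [CommRing k] [Ring A] [Algebra k A]
    [AddCommGroup M] [Module k M] [Module Aᵐᵒᵖ M]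
    [AddCommGroup N] [Module k N] [Module A N] (m : M) (n : N) : BalTensor k A M N :=
  Submodule.Quotient.mk (m ⊗ₜ[k] n)

/-- A Morita context `(R, S, P, Q, φ, ψ)` over the commutative ground ring `k`:
`P` is an `(S,R)`-bimodule and `Q` an `(R,S)`-bimodule (both with symmetric `k`-action, right
actions being encoded as left actions of the opposite algebras), `φ : P ⊗_R Q ≃ S` is an
isomorphism of `(S,S)`-bimodules and `ψ : Q ⊗_S P ≃ R` an isomorphism of `(R,R)`-bimodules
(bilinearity is stated on the classes `p ⊗ q` and `q ⊗ p`, which generate), and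
`φ(p ⊗ q)·p' = p·ψ(q ⊗ p')`, `ψ(q ⊗ p)·q' = q·φ(p ⊗ q')`. -/
structure MoritaContext (k R S P Q : Type*) [CommRing k] [Ring R] [Ring S]
    [Algebra k R] [Algebra k S]
    [AddCommGroup P] [Module k P] [Module S P] [Module Rᵐᵒᵖ P]
    [SMulCommClass S Rᵐᵒᵖ P] [IsScalarTower k S P] [IsScalarTower k Rᵐᵒᵖ P]
    [AddCommGroup Q] [Module k Q] [Module R Q] [Module Sᵐᵒᵖ Q]
    [SMulCommClass R Sᵐᵒᵖ Q] [IsScalarTower k R Q] [IsScalarTower k Sᵐᵒᵖ Q] where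
  φ : BalTensor k R P Q ≃ₗ[k] S
  ψ : BalTensor k S Q P ≃ₗ[k] R
  φ_left : ∀ (s : S) (p : P) (q : Q),
    φ (BalTensor.tmul k R (s • p) q) = s * φ (BalTensor.tmul k R p q)
  φ_right : ∀ (s : S) (p : P) (q : Q),
    φ (BalTensor.tmul k R p (op s • q)) = φ (BalTensor.tmul k R p q) * s
  ψ_left : ∀ (r : R) (q : Q) (p : P),
    ψ (BalTensor.tmul k S (r • q) p) = r * ψ (BalTensor.tmul k S q p)
  ψ_right : ∀ (r : R) (q : Q) (p : P),
    ψ (BalTensor.tmul k S q (op r • p)) = ψ (BalTensor.tmul k S q p) * r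
  assoc_φψ : ∀ (p : P) (q : Q) (p' : P),
    φ (BalTensor.tmul k R p q) • p' = op (ψ (BalTensor.tmul k S q p')) • p
  assoc_ψφ : ∀ (q : Q) (p : P) (q' : Q),
    ψ (BalTensor.tmul k S q p) • q' = op (φ (BalTensor.tmul k R p q')) • q

section MoritaBaseChange

/-- The balancing relations over `R^e = R ⊗_k R^op` in `P^e ⊗_k U ⊗_k Q^e`, where the `k`-modules
underlying `P^e` and `Q^e` are `P ⊗[k] Q` and `Q ⊗[k] P`.  Here `R^e` acts on `U` on both sides
through `η`, on the right of `P^e` by `(p ⊗ q)·(r ⊗ r'^op) = (p·r) ⊗ (r'·q)`, and on the left of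
`Q^e` by `(r ⊗ r'^op)·(c ⊗ d) = (r·c) ⊗ (d·r')`. -/
def UBaseRel (k R U P Q : Type*) [CommRing k] [Ring R] [Algebra k R] [Ring U] [Algebra k U]
    [AddCommGroup P] [Module k P] [Module Rᵐᵒᵖ P]
    [AddCommGroup Q] [Module k Q] [Module R Q] (η : R ⊗[k] Rᵐᵒᵖ →ₐ[k] U) :
    Submodule k ((P ⊗[k] Q) ⊗[k] (U ⊗[k] (Q ⊗[k] P))) :=
  Submodule.span k
    ({z | ∃ (r r' : R) (p : P) (q : Q) (u : U) (c : Q) (d : P),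
        z = ((op r • p) ⊗ₜ[k] (r' • q)) ⊗ₜ[k] (u ⊗ₜ[k] (c ⊗ₜ[k] d))
          - (p ⊗ₜ[k] q) ⊗ₜ[k] ((η (r ⊗ₜ[k] op r') * u) ⊗ₜ[k] (c ⊗ₜ[k] d))} ∪
     {z | ∃ (r r' : R) (p : P) (q : Q) (u : U) (c : Q) (d : P),
        z = (p ⊗ₜ[k] q) ⊗ₜ[k] ((u * η (r ⊗ₜ[k] op r')) ⊗ₜ[k] (c ⊗ₜ[k] d))
          - (p ⊗ₜ[k] q) ⊗ₜ[k] (u ⊗ₜ[k] ((r • c) ⊗ₜ[k] (op r' • d)))})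

variable {k R U : Type*} [CommRing k] [Ring R] [Algebra k R] [Ring U] [Algebra k U]

/-- The `k`-module `Ũ = P^e ⊗_{R^e} U ⊗_{R^e} Q^e`. -/
abbrev UTilde (η : R ⊗[k] Rᵐᵒᵖ →ₐ[k] U) (P Q : Type*)
    [AddCommGroup P] [Module k P] [Module Rᵐᵒᵖ P]
    [AddCommGroup Q] [Module k Q] [Module R Q] :=
  ((P ⊗[k] Q) ⊗[k] (U ⊗[k] (Q ⊗[k] P))) ⧸ UBaseRel k R U P Q η

/-- The class of `(a ⊗ b) ⊗ u ⊗ (c ⊗ d)` in `Ũ`. -/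
def UTilde.mk (η : R ⊗[k] Rᵐᵒᵖ →ₐ[k] U) {P Q : Type*}
    [AddCommGroup P] [Module k P] [Module Rᵐᵒᵖ P]
    [AddCommGroup Q] [Module k Q] [Module R Q]
    (a : P) (b : Q) (u : U) (c : Q) (d : P) : UTilde η P Q :=
  Submodule.Quotient.mk ((a ⊗ₜ[k] b) ⊗ₜ[k] (u ⊗ₜ[k] (c ⊗ₜ[k] d)))

variable {S P Q : Type*} [Ring S] [Algebra k S]
    [AddCommGroup P] [Module k P] [Module S P] [Module Rᵐᵒᵖ P]
    [SMulCommClass S Rᵐᵒᵖ P] [IsScalarTower k S P] [IsScalarTower k Rᵐᵒᵖ P]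
    [AddCommGroup Q] [Module k Q] [Module R Q] [Module Sᵐᵒᵖ Q]
    [SMulCommClass R Sᵐᵒᵖ Q] [IsScalarTower k R Q] [IsScalarTower k Sᵐᵒᵖ Q]

/-- A `k`-bilinear operation on `Ũ` is given on generators by
`((a₁ ⊗ b₁) ⊗ u ⊗ (c₁ ⊗ d₁)) · ((a₂ ⊗ b₂) ⊗ v ⊗ (c₂ ⊗ d₂))
  = (a₁ ⊗ b₁) ⊗ [(u·η(ψ(c₁ ⊗ a₂) ⊗ 1)) · (η(1 ⊗ ψ(b₂ ⊗ d₁)^op)·v)] ⊗ (c₂ ⊗ d₂)`. -/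
def IsBaseChangeMul (ctx : MoritaContext k R S P Q) (η : R ⊗[k] Rᵐᵒᵖ →ₐ[k] U)
    (mul : UTilde η P Q →ₗ[k] UTilde η P Q →ₗ[k] UTilde η P Q) : Prop :=
  ∀ (a₁ : P) (b₁ : Q) (u : U) (c₁ : Q) (d₁ : P)
    (a₂ : P) (b₂ : Q) (v : U) (c₂ : Q) (d₂ : P),
    mul (UTilde.mk η a₁ b₁ u c₁ d₁) (UTilde.mk η a₂ b₂ v c₂ d₂) =
      UTilde.mk η a₁ b₁
        ((u * η (ctx.ψ (BalTensor.tmul k S c₁ a₂) ⊗ₜ[k] (1 : Rᵐᵒᵖ))) *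
          (η ((1 : R) ⊗ₜ[k] op (ctx.ψ (BalTensor.tmul k S b₂ d₁))) * v))
        c₂ d₂

end MoritaBaseChange

/-!
The product formula is a sandwich (Munn) multiplication on `P^e ⊗ U ⊗ Q^e` for the pairing
`Q^e × P^e → U` induced by `ψ`. Such a multiplication is associative for every pairing, and it
descends to `Ũ` because this pairing is linear over `R^e` on both sides. The families `p'` and `q'`
are dual bases with respect to `ψ`, and the expansions of elements of `P` and `Q` in them give the
unit. The left action of `S^e` on `P^e` commutes with right multiplication in `Ũ`, so
`w ↦ w • 1` is multiplicative. It is `η̃` because the elements `∑ i, q' i t ⊗ p' i` and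
`∑ i, q' i ⊗ t p' i` of `Q ⊗ P` agree once scalars from `R` may be moved from `Q` to `P`.
-/

section Sandwich

variable {k M N U : Type*} [CommSemiring k] [AddCommMonoid M] [Module k M]
  [AddCommMonoid N] [Module k N] [Semiring U] [Algebra k U]

/-- The sandwich (Munn) multiplication on `M ⊗ U ⊗ N` attached to a pairing `β : N × M → U`,
namely `(m ⊗ u ⊗ n) * (m' ⊗ v ⊗ n') = m ⊗ (u * β n m' * v) ⊗ n'`. -/
def sandwichMul (β : N →ₗ[k] M →ₗ[k] U) :
    M ⊗[k] (U ⊗[k] N) →ₗ[k] M ⊗[k] (U ⊗[k] N) →ₗ[k] M ⊗[k] (U ⊗[k] N) :=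
  let contract : U ⊗[k] N →ₗ[k] M ⊗[k] (U ⊗[k] N) →ₗ[k] U ⊗[k] N :=
    TensorProduct.lift <|
      (((LinearMap.llcomp k M U U ∘ₗ LinearMap.mul k U).compl₂ β).compr₂
        (LinearMap.llcomp k M U _ (LinearMap.rTensorHom N ∘ₗ LinearMap.mul k U))).compr₂
        (TensorProduct.uncurry (RingHom.id k) M (U ⊗[k] N) (U ⊗[k] N))
  TensorProduct.lift <|
    (LinearMap.llcomp k _ _ _ ∘ₗ TensorProduct.mk k M (U ⊗[k] N)).compl₂ contract

@[simp]
theorem sandwichMul_tmul (β : N →ₗ[k] M →ₗ[k] U) (m m' : M) (u v : U) (n n' : N) :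
    sandwichMul β (m ⊗ₜ (u ⊗ₜ n)) (m' ⊗ₜ (v ⊗ₜ n')) = m ⊗ₜ ((u * β n m' * v) ⊗ₜ n') :=
  rfl

theorem sandwichMul_assoc (β : N →ₗ[k] M →ₗ[k] U) (x y z : M ⊗[k] (U ⊗[k] N)) :
    sandwichMul β (sandwichMul β x y) z = sandwichMul β x (sandwichMul β y z) := by
  have h : (sandwichMul β).compr₂ (sandwichMul β) =
      (LinearMap.llcomp k _ _ _ ∘ₗ sandwichMul β).compl₂ (sandwichMul β) := by
    ext m u n m' v n' m'' w n''
    simp [mul_assoc]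
  exact LinearMap.congr_fun (LinearMap.congr_fun₂ h x y) z

theorem sandwichMul_rTensor_left (β : N →ₗ[k] M →ₗ[k] U) (f : M →ₗ[k] M)
    (x y : M ⊗[k] (U ⊗[k] N)) :
    sandwichMul β (f.rTensor (U ⊗[k] N) x) y = f.rTensor (U ⊗[k] N) (sandwichMul β x y) := by
  have h : sandwichMul β ∘ₗ f.rTensor (U ⊗[k] N) =
      (sandwichMul β).compr₂ (f.rTensor (U ⊗[k] N)) := by
    ext m u n m' v n'
    simp
  exact LinearMap.congr_fun₂ h x y

end Sandwich

section EnvelopingPairing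

variable {k R U P Q : Type*} [CommRing k] [Ring R] [Algebra k R] [Ring U] [Algebra k U]
  [AddCommGroup P] [Module k P] [AddCommGroup Q] [Module k Q]

/-- The pairing `Q^e × P^e → U`, `(c ⊗ d, a ⊗ b) ↦ η (ψ(c, a) ⊗ ψ(b, d)^op)`, induced by
`ψ : Q × P → R`. -/
def envelopingPairing (η : R ⊗[k] Rᵐᵒᵖ →ₐ[k] U) (ψ : Q →ₗ[k] P →ₗ[k] R) :
    Q ⊗[k] P →ₗ[k] P ⊗[k] Q →ₗ[k] U :=
  (TensorProduct.map₂ ψ (ψ.flip.compr₂ (opLinearEquiv k).toLinearMap)).compr₂ η.toLinearMap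

theorem envelopingPairing_tmul (η : R ⊗[k] Rᵐᵒᵖ →ₐ[k] U) (ψ : Q →ₗ[k] P →ₗ[k] R)
    (c : Q) (d a : P) (b : Q) :
    envelopingPairing η ψ (c ⊗ₜ d) (a ⊗ₜ b) = η (ψ c a ⊗ₜ op (ψ b d)) :=
  rfl

end EnvelopingPairing

section Pairing

variable {k R P Q : Type*} [CommRing k] [Ring R] [Algebra k R]
  [AddCommGroup P] [Module k P] [Module Rᵐᵒᵖ P] [AddCommGroup Q] [Module k Q] [Module R Q]

/-- The `k`-bilinear map `ψ : Q × P → R` is `R`-linear on the left in `Q` and on the right in `P`,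
i.e. it is a map of `(R, R)`-bimodules on `Q ⊗[k] P`. -/
structure IsBimodulePairing (ψ : Q →ₗ[k] P →ₗ[k] R) : Prop where
  smul_left (r : R) (q : Q) (p : P) : ψ (r • q) p = r * ψ q p
  smul_right (r : R) (q : Q) (p : P) : ψ q (op r • p) = ψ q p * r

/-- The families `p'` and `q'` are dual bases of the right `R`-module `P` and the left
`R`-module `Q` with respect to the pairing `ψ : Q × P → R`. -/
structure IsDualBasis {κ : Type*} [Fintype κ] (ψ : Q →ₗ[k] P →ₗ[k] R) (p' : κ → P) (q' : κ → Q) :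
    Prop where
  sum_op_smul (p : P) : ∑ j, op (ψ (q' j) p) • p' j = p
  sum_smul (q : Q) : ∑ j, ψ q (p' j) • q' j = q

variable {U : Type*} [Ring U] [Algebra k U]

namespace IsBimodulePairing

variable {ψ : Q →ₗ[k] P →ₗ[k] R}

theorem envelopingPairing_smul_left (hψ : IsBimodulePairing ψ) (η : R ⊗[k] Rᵐᵒᵖ →ₐ[k] U)
    (r r' : R) (c : Q) (d a : P) (b : Q) :
    envelopingPairing η ψ ((r • c) ⊗ₜ (op r' • d)) (a ⊗ₜ b) =
      η (r ⊗ₜ op r') * envelopingPairing η ψ (c ⊗ₜ d) (a ⊗ₜ b) := by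
  simp only [envelopingPairing_tmul, hψ.smul_left, hψ.smul_right, ← map_mul,
    Algebra.TensorProduct.tmul_mul_tmul, op_mul]

theorem envelopingPairing_smul_right (hψ : IsBimodulePairing ψ) (η : R ⊗[k] Rᵐᵒᵖ →ₐ[k] U)
    (r r' : R) (c : Q) (d a : P) (b : Q) :
    envelopingPairing η ψ (c ⊗ₜ d) ((op r • a) ⊗ₜ (r' • b)) =
      envelopingPairing η ψ (c ⊗ₜ d) (a ⊗ₜ b) * η (r ⊗ₜ op r') := by
  simp only [envelopingPairing_tmul, hψ.smul_left, hψ.smul_right, ← map_mul,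
    Algebra.TensorProduct.tmul_mul_tmul, op_mul]

end IsBimodulePairing

end Pairing

namespace UTilde

variable {k R U P Q : Type*} [CommRing k] [Ring R] [Algebra k R] [Ring U] [Algebra k U]
  [AddCommGroup P] [Module k P] [Module Rᵐᵒᵖ P] [AddCommGroup Q] [Module k Q] [Module R Q]

section Balanced

variable {η : R ⊗[k] Rᵐᵒᵖ →ₐ[k] U} {X : Type*} [AddCommGroup X] [Module k X]

@[simp]
theorem quotientMk_tmul (a : P) (b : Q) (u : U) (c : Q) (d : P) :
    Submodule.Quotient.mk (p := UBaseRel k R U P Q η) ((a ⊗ₜ b) ⊗ₜ (u ⊗ₜ (c ⊗ₜ d))) =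
      mk η a b u c d :=
  rfl

theorem mk_smul_left (r r' : R) (a : P) (b : Q) (u : U) (c : Q) (d : P) :
    mk η (op r • a) (r' • b) u c d = mk η a b (η (r ⊗ₜ op r') * u) c d :=
  (Submodule.Quotient.eq _).2 (Submodule.subset_span (Or.inl ⟨r, r', a, b, u, c, d, rfl⟩))

theorem mk_smul_right (r r' : R) (a : P) (b : Q) (u : U) (c : Q) (d : P) :
    mk η a b u (r • c) (op r' • d) = mk η a b (u * η (r ⊗ₜ op r')) c d :=
  Eq.symm <|
    (Submodule.Quotient.eq _).2 (Submodule.subset_span (Or.inr ⟨r, r', a, b, u, c, d, rfl⟩))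

theorem mk_one_smul_comm (r : R) (a : P) (b c : Q) (d : P) :
    mk η a (r • b) 1 c d = mk η a b 1 c (op r • d) := by
  have hl := mk_smul_left (η := η) 1 r a b 1 c d
  have hr := mk_smul_right (η := η) 1 r a b 1 c d
  simp only [op_one, one_smul, mul_one, one_mul] at hl hr
  exact hl.trans hr.symm

theorem uBaseRel_le_ker {f : (P ⊗[k] Q) ⊗[k] (U ⊗[k] (Q ⊗[k] P)) →ₗ[k] X}
    (left : ∀ r r' a b u c d, f (((op r • a) ⊗ₜ (r' • b)) ⊗ₜ (u ⊗ₜ (c ⊗ₜ d))) =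
      f ((a ⊗ₜ b) ⊗ₜ ((η (r ⊗ₜ op r') * u) ⊗ₜ (c ⊗ₜ d))))
    (right : ∀ r r' a b u c d, f ((a ⊗ₜ b) ⊗ₜ (u ⊗ₜ ((r • c) ⊗ₜ (op r' • d)))) =
      f ((a ⊗ₜ b) ⊗ₜ ((u * η (r ⊗ₜ op r')) ⊗ₜ (c ⊗ₜ d)))) :
    UBaseRel k R U P Q η ≤ LinearMap.ker f := by
  refine Submodule.span_le.2 ?_
  rintro _ (⟨r, r', a, b, u, c, d, rfl⟩ | ⟨r, r', a, b, u, c, d, rfl⟩)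
  · exact LinearMap.sub_mem_ker_iff.2 (left r r' a b u c d)
  · exact LinearMap.sub_mem_ker_iff.2 (right r r' a b u c d).symm

theorem hom_ext {f g : UTilde η P Q →ₗ[k] X}
    (h : ∀ a b u c d, f (mk η a b u c d) = g (mk η a b u c d)) : f = g := by
  ext a b u c d
  exact h a b u c d

variable (η) in
/-- The class of `(a ⊗ b) ⊗ u ⊗ (c ⊗ d)` as a `k`-multilinear function of its five arguments. -/
def mkₗ (P Q : Type*) [AddCommGroup P] [Module k P] [Module Rᵐᵒᵖ P]
    [AddCommGroup Q] [Module k Q] [Module R Q] :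
    P →ₗ[k] Q →ₗ[k] U →ₗ[k] Q →ₗ[k] P →ₗ[k] UTilde η P Q :=
  (TensorProduct.curry (TensorProduct.curry (UBaseRel k R U P Q η).mkQ)).compr₂
    (LinearMap.llcomp k U _ _ (TensorProduct.lcurry (RingHom.id k) Q P _) ∘ₗ
      TensorProduct.lcurry (RingHom.id k) U (Q ⊗[k] P) _)

theorem mkₗ_apply (a : P) (b : Q) (u : U) (c : Q) (d : P) :
    mkₗ η P Q a b u c d = mk η a b u c d :=
  rfl

end Balanced

section Mul

variable {η : R ⊗[k] Rᵐᵒᵖ →ₐ[k] U} {ψ : Q →ₗ[k] P →ₗ[k] R}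

variable (η ψ) in
/-- The bilinear operation `mul` on `Ũ` is given on generators by the formula of
`IsBaseChangeMul`, for an arbitrary bilinear map `ψ : Q × P → R`. -/
def IsPairingMul (mul : UTilde η P Q →ₗ[k] UTilde η P Q →ₗ[k] UTilde η P Q) : Prop :=
  ∀ (a₁ : P) (b₁ : Q) (u : U) (c₁ : Q) (d₁ : P) (a₂ : P) (b₂ : Q) (v : U) (c₂ : Q) (d₂ : P),
    mul (mk η a₁ b₁ u c₁ d₁) (mk η a₂ b₂ v c₂ d₂) =
      mk η a₁ b₁
        ((u * η (ψ c₁ a₂ ⊗ₜ (1 : Rᵐᵒᵖ))) * (η ((1 : R) ⊗ₜ op (ψ b₂ d₁)) * v)) c₂ d₂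

theorem IsPairingMul.unique {mul mul' : UTilde η P Q →ₗ[k] UTilde η P Q →ₗ[k] UTilde η P Q}
    (h : IsPairingMul η ψ mul) (h' : IsPairingMul η ψ mul') : mul = mul' :=
  hom_ext fun _ _ _ _ _ => hom_ext fun _ _ _ _ _ => (h ..).trans (h' ..).symm

variable (η) in
/-- The multiplication on `Ũ` induced by the sandwich multiplication of `P^e ⊗ U ⊗ Q^e`. -/
def pairingMul (hψ : IsBimodulePairing ψ) :
    UTilde η P Q →ₗ[k] UTilde η P Q →ₗ[k] UTilde η P Q :=
  ((sandwichMul (envelopingPairing η ψ)).compr₂ (UBaseRel k R U P Q η).mkQ).liftQ₂ _ _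
    (uBaseRel_le_ker
      (fun r r' a b u c d => by
        ext a' b' v c' d'
        simp [mk_smul_left, mul_assoc])
      (fun r r' a b u c d => by
        ext a' b' v c' d'
        simp [hψ.envelopingPairing_smul_left, mul_assoc]))
    (uBaseRel_le_ker
      (fun r r' a b u c d => by
        ext a' b' v c' d'
        simp [hψ.envelopingPairing_smul_right, mul_assoc])
      (fun r r' a b u c d => by
        ext a' b' v c' d'
        simp [mk_smul_right, mul_assoc]))

theorem pairingMul_mk (hψ : IsBimodulePairing ψ) (a₁ : P) (b₁ : Q) (u : U) (c₁ : Q) (d₁ : P)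
    (a₂ : P) (b₂ : Q) (v : U) (c₂ : Q) (d₂ : P) :
    pairingMul η hψ (mk η a₁ b₁ u c₁ d₁) (mk η a₂ b₂ v c₂ d₂) =
      mk η a₁ b₁ (u * η (ψ c₁ a₂ ⊗ₜ op (ψ b₂ d₁)) * v) c₂ d₂ :=
  rfl

theorem isPairingMul_pairingMul (hψ : IsBimodulePairing ψ) :
    IsPairingMul η ψ (pairingMul η hψ) := by
  intro a₁ b₁ u c₁ d₁ a₂ b₂ v c₂ d₂
  have h : η (ψ c₁ a₂ ⊗ₜ 1) * η (1 ⊗ₜ op (ψ b₂ d₁)) = η (ψ c₁ a₂ ⊗ₜ op (ψ b₂ d₁)) := by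
    rw [← map_mul, Algebra.TensorProduct.tmul_mul_tmul, mul_one, one_mul]
  rw [pairingMul_mk, ← h]
  simp only [mul_assoc]

theorem pairingMul_assoc (hψ : IsBimodulePairing ψ) (x y z : UTilde η P Q) :
    pairingMul η hψ (pairingMul η hψ x y) z = pairingMul η hψ x (pairingMul η hψ y z) := by
  obtain ⟨x, rfl⟩ := Submodule.mkQ_surjective _ x
  obtain ⟨y, rfl⟩ := Submodule.mkQ_surjective _ y
  obtain ⟨z, rfl⟩ := Submodule.mkQ_surjective _ z
  exact congrArg (UBaseRel k R U P Q η).mkQ (sandwichMul_assoc (envelopingPairing η ψ) x y z)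

end Mul

section Unit

variable {κ : Type*} [Fintype κ] {ψ : Q →ₗ[k] P →ₗ[k] R} {p' : κ → P} {q' : κ → Q}

/-- The element `∑ (p'ⱼ ⊗ q'ᵢ) ⊗ 1 ⊗ (q'ⱼ ⊗ p'ᵢ)` of `Ũ`, which is its unit when `p'` and `q'` are
dual bases. -/
def dualBasisUnit (η : R ⊗[k] Rᵐᵒᵖ →ₐ[k] U) (p' : κ → P) (q' : κ → Q) : UTilde η P Q :=
  ∑ i, ∑ j, mk η (p' j) (q' i) 1 (q' j) (p' i)

variable {η : R ⊗[k] Rᵐᵒᵖ →ₐ[k] U}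

theorem dualBasisUnit_mul (hψ : IsBimodulePairing ψ) (h : IsDualBasis ψ p' q')
    (x : UTilde η P Q) : pairingMul η hψ (dualBasisUnit η p' q') x = x := by
  suffices pairingMul η hψ (dualBasisUnit η p' q') = LinearMap.id from LinearMap.congr_fun this x
  refine hom_ext fun a b u c d => ?_
  calc pairingMul η hψ (dualBasisUnit η p' q') (mk η a b u c d)
      = ∑ i, ∑ j, mk η (op (ψ (q' j) a) • p' j) (ψ b (p' i) • q' i) u c d := by
        simp only [dualBasisUnit, map_sum, LinearMap.sum_apply, pairingMul_mk, one_mul,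
          mk_smul_left]
    _ = mk η (∑ j, op (ψ (q' j) a) • p' j) (∑ i, ψ b (p' i) • q' i) u c d := by
        simp only [← mkₗ_apply, map_sum, LinearMap.sum_apply]
    _ = mk η a b u c d := by rw [h.sum_op_smul, h.sum_smul]

theorem mul_dualBasisUnit (hψ : IsBimodulePairing ψ) (h : IsDualBasis ψ p' q')
    (x : UTilde η P Q) : pairingMul η hψ x (dualBasisUnit η p' q') = x := by
  suffices (pairingMul η hψ).flip (dualBasisUnit η p' q') = LinearMap.id from
    LinearMap.congr_fun this x
  refine hom_ext fun a b u c d => ?_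
  calc pairingMul η hψ (mk η a b u c d) (dualBasisUnit η p' q')
      = ∑ i, ∑ j, mk η a b u (ψ c (p' j) • q' j) (op (ψ (q' i) d) • p' i) := by
        simp only [dualBasisUnit, map_sum, pairingMul_mk, mul_one, mk_smul_right]
    _ = mk η a b u (∑ j, ψ c (p' j) • q' j) (∑ i, op (ψ (q' i) d) • p' i) := by
        simp only [← mkₗ_apply, map_sum, LinearMap.sum_apply]
    _ = mk η a b u c d := by rw [h.sum_op_smul, h.sum_smul]

theorem sum_mk_op_smul_dualBasis {S : Type*} [Ring S] [Module S P] [Module Sᵐᵒᵖ Q]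
    (h : IsDualBasis ψ p' q')
    (hS : ∀ (s : S) q p, ψ (op s • q) p = ψ q (s • p)) (s : S) (a : P) (c : Q) :
    ∑ i, mk η a (op s • q' i) 1 c (p' i) = ∑ i, mk η a (q' i) 1 c (s • p' i) :=
  calc ∑ i, mk η a (op s • q' i) 1 c (p' i)
      = ∑ i, mk η a (∑ l, ψ (op s • q' i) (p' l) • q' l) 1 c (p' i) := by
        simp only [h.sum_smul]
    _ = ∑ i, ∑ l, mk η a (ψ (q' i) (s • p' l) • q' l) 1 c (p' i) := by
        simp only [hS, ← mkₗ_apply, map_sum, LinearMap.sum_apply]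
    _ = ∑ l, ∑ i, mk η a (q' l) 1 c (op (ψ (q' i) (s • p' l)) • p' i) := by
        rw [Finset.sum_comm]
        simp only [mk_one_smul_comm]
    _ = ∑ l, mk η a (q' l) 1 c (∑ i, op (ψ (q' i) (s • p' l)) • p' i) := by
        simp only [← mkₗ_apply, map_sum]
    _ = ∑ l, mk η a (q' l) 1 c (s • p' l) := by simp only [h.sum_op_smul]

end Unit

section Action

variable {S : Type*} [Ring S] [Algebra k S] [Module S P] [SMulCommClass S Rᵐᵒᵖ P]
  [IsScalarTower k S P] [Module Sᵐᵒᵖ Q] [SMulCommClass R Sᵐᵒᵖ Q] [IsScalarTower k Sᵐᵒᵖ Q]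

/-- The left action `(s ⊗ t) • (a ⊗ b) = (s a) ⊗ (b t)` of `S^e` on `P^e`. -/
def outerAction (k S P Q : Type*) [CommRing k] [Ring S] [Algebra k S]
    [AddCommGroup P] [Module k P] [Module S P] [IsScalarTower k S P]
    [AddCommGroup Q] [Module k Q] [Module Sᵐᵒᵖ Q] [IsScalarTower k Sᵐᵒᵖ Q] :
    S ⊗[k] Sᵐᵒᵖ →ₐ[k] Module.End k (P ⊗[k] Q) :=
  (Module.endTensorEndAlgHom (R := k) (S := k) (A := k)).comp
    (Algebra.TensorProduct.map (Algebra.lsmul k k P) (Algebra.lsmul k k Q))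

@[simp]
theorem outerAction_tmul (s : S) (t : Sᵐᵒᵖ) (a : P) (b : Q) :
    outerAction k S P Q (s ⊗ₜ t) (a ⊗ₜ b) = (s • a) ⊗ₜ (t • b) :=
  rfl

variable (η : R ⊗[k] Rᵐᵒᵖ →ₐ[k] U)

/-- The left action of `S^e` on `Ũ` through its left factor `P^e`. -/
def leftAction : S ⊗[k] Sᵐᵒᵖ →ₗ[k] UTilde η P Q →ₗ[k] UTilde η P Q :=
  ((UBaseRel k R U P Q η).liftQ
    ((LinearMap.rTensorHom (U ⊗[k] (Q ⊗[k] P)) ∘ₗ (outerAction k S P Q).toLinearMap).compr₂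
      (UBaseRel k R U P Q η).mkQ).flip
    (uBaseRel_le_ker
      (fun r r' a b u c d => TensorProduct.ext' fun s t => by
        simp [mk_smul_left, smul_comm s, ← smul_comm r'])
      (fun r r' a b u c d => TensorProduct.ext' fun s t => by
        simp [mk_smul_right]))).flip

variable {η}

theorem leftAction_mkQ (w : S ⊗[k] Sᵐᵒᵖ) (x : (P ⊗[k] Q) ⊗[k] (U ⊗[k] (Q ⊗[k] P))) :
    leftAction η w ((UBaseRel k R U P Q η).mkQ x) =
      (UBaseRel k R U P Q η).mkQ ((outerAction k S P Q w).rTensor _ x) :=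
  rfl

theorem leftAction_tmul_mk (s : S) (t : Sᵐᵒᵖ) (a : P) (b : Q) (u : U) (c : Q) (d : P) :
    leftAction η (s ⊗ₜ t) (mk η a b u c d) = mk η (s • a) (t • b) u c d :=
  rfl

theorem leftAction_one (x : UTilde η P Q) : leftAction η (1 : S ⊗[k] Sᵐᵒᵖ) x = x := by
  obtain ⟨x, rfl⟩ := Submodule.mkQ_surjective _ x
  rw [leftAction_mkQ, map_one, Module.End.one_eq_id, LinearMap.rTensor_id_apply]

theorem leftAction_mul (v w : S ⊗[k] Sᵐᵒᵖ) (x : UTilde η P Q) :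
    leftAction η (v * w) x = leftAction η v (leftAction η w x) := by
  obtain ⟨x, rfl⟩ := Submodule.mkQ_surjective _ x
  simp only [leftAction_mkQ, map_mul, LinearMap.rTensor_mul, Module.End.mul_apply]

variable {ψ : Q →ₗ[k] P →ₗ[k] R}

theorem leftAction_pairingMul (hψ : IsBimodulePairing ψ) (w : S ⊗[k] Sᵐᵒᵖ)
    (x y : UTilde η P Q) :
    pairingMul η hψ (leftAction η w x) y = leftAction η w (pairingMul η hψ x y) := by
  obtain ⟨x, rfl⟩ := Submodule.mkQ_surjective _ x
  obtain ⟨y, rfl⟩ := Submodule.mkQ_surjective _ y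
  exact congrArg (UBaseRel k R U P Q η).mkQ
    (sandwichMul_rTensor_left (envelopingPairing η ψ) (outerAction k S P Q w) x y)

variable {κ : Type*} [Fintype κ] {p' : κ → P} {q' : κ → Q}

variable (η p' q') in
/-- The map `η̃ : S^e → Ũ`, encoded as `w ↦ w • 1`. -/
def baseChangeUnitMap : S ⊗[k] Sᵐᵒᵖ →ₗ[k] UTilde η P Q :=
  (leftAction η).flip (dualBasisUnit η p' q')

theorem baseChangeUnitMap_one : baseChangeUnitMap η p' q' (1 : S ⊗[k] Sᵐᵒᵖ) =
    dualBasisUnit η p' q' :=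
  leftAction_one _

theorem baseChangeUnitMap_mul (hψ : IsBimodulePairing ψ) (h : IsDualBasis ψ p' q')
    (v w : S ⊗[k] Sᵐᵒᵖ) :
    baseChangeUnitMap η p' q' (v * w) =
      pairingMul η hψ (baseChangeUnitMap η p' q' v) (baseChangeUnitMap η p' q' w) := by
  simp only [baseChangeUnitMap, LinearMap.flip_apply, leftAction_mul, leftAction_pairingMul,
    dualBasisUnit_mul hψ h]

theorem baseChangeUnitMap_tmul (h : IsDualBasis ψ p' q')
    (hS : ∀ (s : S) q p, ψ (op s • q) p = ψ q (s • p)) (s t : S) :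
    baseChangeUnitMap η p' q' (s ⊗ₜ op t) =
      ∑ i, ∑ j, mk η (s • p' j) (q' i) 1 (q' j) (t • p' i) :=
  calc baseChangeUnitMap η p' q' (s ⊗ₜ op t)
      = ∑ i, ∑ j, mk η (s • p' j) (op t • q' i) 1 (q' j) (p' i) := by
        simp only [baseChangeUnitMap, LinearMap.flip_apply, dualBasisUnit, map_sum,
          LinearMap.sum_apply, leftAction_tmul_mk]
    _ = ∑ i, ∑ j, mk η (s • p' j) (q' i) 1 (q' j) (t • p' i) := by
        rw [Finset.sum_comm, Finset.sum_comm (f := fun i j => mk η _ (q' i) 1 _ _)]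
        simp only [sum_mk_op_smul_dualBasis h hS]

end Action

end UTilde

namespace MoritaContext

variable {k R S P Q : Type*} [CommRing k] [Ring R] [Ring S] [Algebra k R] [Algebra k S]
  [AddCommGroup P] [Module k P] [Module S P] [Module Rᵐᵒᵖ P]
  [SMulCommClass S Rᵐᵒᵖ P] [IsScalarTower k S P] [IsScalarTower k Rᵐᵒᵖ P]
  [AddCommGroup Q] [Module k Q] [Module R Q] [Module Sᵐᵒᵖ Q]
  [SMulCommClass R Sᵐᵒᵖ Q] [IsScalarTower k R Q] [IsScalarTower k Sᵐᵒᵖ Q]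
  (ctx : MoritaContext k R S P Q)

/-- The isomorphism `ψ : Q ⊗_S P ≃ R` of a Morita context as a bilinear map on `Q × P`. -/
def pairing : Q →ₗ[k] P →ₗ[k] R :=
  TensorProduct.curry (ctx.ψ.toLinearMap ∘ₗ (midRel k S Q P).mkQ)

theorem isBimodulePairing_pairing : IsBimodulePairing ctx.pairing where
  smul_left := ctx.ψ_left
  smul_right := ctx.ψ_right

theorem pairing_op_smul (s : S) (q : Q) (p : P) :
    ctx.pairing (op s • q) p = ctx.pairing q (s • p) :=
  congrArg ctx.ψ <|
    (Submodule.Quotient.eq _).2 (Submodule.subset_span ⟨q, s, p, rfl⟩)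

theorem isDualBasis_pairing {κ : Type*} [Fintype κ] {p' : κ → P} {q' : κ → Q}
    (h1 : ∑ j, ctx.φ (BalTensor.tmul k R (p' j) (q' j)) = 1) :
    IsDualBasis ctx.pairing p' q' where
  sum_op_smul p :=
    calc ∑ j, op (ctx.pairing (q' j) p) • p' j
        = ∑ j, ctx.φ (BalTensor.tmul k R (p' j) (q' j)) • p :=
          Finset.sum_congr rfl fun j _ => (ctx.assoc_φψ (p' j) (q' j) p).symm
      _ = p := by rw [← Finset.sum_smul, h1, one_smul]
  sum_smul q :=
    calc ∑ j, ctx.pairing q (p' j) • q' j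
        = ∑ j, op (ctx.φ (BalTensor.tmul k R (p' j) (q' j))) • q :=
          Finset.sum_congr rfl fun j _ => ctx.assoc_ψφ q (p' j) (q' j)
      _ = q := by rw [← Finset.sum_smul, ← Finset.op_sum, h1, op_one, one_smul]

end MoritaContext

theorem morita_base_change_ring_general
    {k R S U P Q : Type*} [CommRing k] [Ring R] [Ring S] [Algebra k R] [Algebra k S]
    [Ring U] [Algebra k U]
    [AddCommGroup P] [Module k P] [Module S P] [Module Rᵐᵒᵖ P]
    [SMulCommClass S Rᵐᵒᵖ P] [IsScalarTower k S P]
    [AddCommGroup Q] [Module k Q] [Module R Q] [Module Sᵐᵒᵖ Q]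
    [SMulCommClass R Sᵐᵒᵖ Q] [IsScalarTower k Sᵐᵒᵖ Q]
    {ψ : Q →ₗ[k] P →ₗ[k] R} (hψ : IsBimodulePairing ψ)
    (hS : ∀ (s : S) q p, ψ (op s • q) p = ψ q (s • p))
    {κ : Type*} [Fintype κ] {p' : κ → P} {q' : κ → Q} (h : IsDualBasis ψ p' q')
    (η : R ⊗[k] Rᵐᵒᵖ →ₐ[k] U) :
    (∃! mul : UTilde η P Q →ₗ[k] UTilde η P Q →ₗ[k] UTilde η P Q, UTilde.IsPairingMul η ψ mul) ∧
    ∀ mul : UTilde η P Q →ₗ[k] UTilde η P Q →ₗ[k] UTilde η P Q, UTilde.IsPairingMul η ψ mul →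
      (∀ x y z, mul (mul x y) z = mul x (mul y z)) ∧
      (∀ x, mul (UTilde.dualBasisUnit η p' q') x = x ∧
        mul x (UTilde.dualBasisUnit η p' q') = x) ∧
      ∃ ηt : S ⊗[k] Sᵐᵒᵖ →ₗ[k] UTilde η P Q,
        (∀ s s' : S, ηt (s ⊗ₜ[k] op s') =
          ∑ i, ∑ j, UTilde.mk η (s • p' j) (q' i) 1 (q' j) (s' • p' i)) ∧
        (∀ a b : S ⊗[k] Sᵐᵒᵖ, ηt (a * b) = mul (ηt a) (ηt b)) ∧
        ηt 1 = UTilde.dualBasisUnit η p' q' := by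
  have hmul := UTilde.isPairingMul_pairingMul (η := η) hψ
  refine ⟨⟨_, hmul, fun _ h' => h'.unique hmul⟩, fun mul h' => ?_⟩
  obtain rfl := h'.unique hmul
  exact ⟨UTilde.pairingMul_assoc hψ,
    fun x => ⟨UTilde.dualBasisUnit_mul hψ h x, UTilde.mul_dualBasisUnit hψ h x⟩,
    UTilde.baseChangeUnitMap η p' q', UTilde.baseChangeUnitMap_tmul h hS,
    UTilde.baseChangeUnitMap_mul hψ h, UTilde.baseChangeUnitMap_one⟩

theorem morita_base_change_ring
    {k R S U P Q : Type*} [CommRing k] [Ring R] [Ring S] [Algebra k R] [Algebra k S]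
    [Ring U] [Algebra k U]
    [AddCommGroup P] [Module k P] [Module S P] [Module Rᵐᵒᵖ P]
    [SMulCommClass S Rᵐᵒᵖ P] [IsScalarTower k S P] [IsScalarTower k Rᵐᵒᵖ P]
    [AddCommGroup Q] [Module k Q] [Module R Q] [Module Sᵐᵒᵖ Q]
    [SMulCommClass R Sᵐᵒᵖ Q] [IsScalarTower k R Q] [IsScalarTower k Sᵐᵒᵖ Q]
    (ctx : MoritaContext k R S P Q)
    {κ : Type*} [Fintype κ] (p' : κ → P) (q' : κ → Q)
    (h1 : ∑ j, ctx.φ (BalTensor.tmul k R (p' j) (q' j)) = 1)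
    (η : R ⊗[k] Rᵐᵒᵖ →ₐ[k] U) :
    -- the formula gives a well-defined `k`-bilinear multiplication on `Ũ`
    (∃! mul : UTilde η P Q →ₗ[k] UTilde η P Q →ₗ[k] UTilde η P Q, IsBaseChangeMul ctx η mul) ∧
    ∀ mul : UTilde η P Q →ₗ[k] UTilde η P Q →ₗ[k] UTilde η P Q, IsBaseChangeMul ctx η mul →
      -- it is associative
      (∀ x y z, mul (mul x y) z = mul x (mul y z)) ∧
      -- it has the stated two-sided unit
      (∀ x, mul (∑ i, ∑ j, UTilde.mk η (p' j) (q' i) 1 (q' j) (p' i)) x = x ∧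
        mul x (∑ i, ∑ j, UTilde.mk η (p' j) (q' i) 1 (q' j) (p' i)) = x) ∧
      -- `η̃` is well defined, `k`-linear, multiplicative and unital
      ∃ ηt : S ⊗[k] Sᵐᵒᵖ →ₗ[k] UTilde η P Q,
        (∀ s s' : S, ηt (s ⊗ₜ[k] op s') =
          ∑ i, ∑ j, UTilde.mk η (s • p' j) (q' i) 1 (q' j) (s' • p' i)) ∧
        (∀ a b : S ⊗[k] Sᵐᵒᵖ, ηt (a * b) = mul (ηt a) (ηt b)) ∧
        ηt 1 = ∑ i, ∑ j, UTilde.mk η (p' j) (q' i) 1 (q' j) (p' i) := by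
  exact morita_base_change_ring_general ctx.isBimodulePairing_pairing ctx.pairing_op_smul
    (ctx.isDualBasis_pairing h1) η
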